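/- In the tensor product model of F_γ ⊗ D⁺_j (see context), assume j is a half-integer with −½ ≤ j ≤ γ − 1. Let M := j+1+γ and let V_M ⊆ W be the span of {e_ν ⊗ f_{M−ν} : ν ∈ M_γ} (a (2γ+1)-dimensional J₀-eigenspace, preserved by Q). Then the restriction of Q to V_M is NOT diagonalizable: V_M is not spanned by eigenvectors of Q. Consequently Q is not diagonalizable on W, and the coupling F_γ ⊗ D⁺_j admits no decomposition into irreducible modules when j ≤ γ − 1. -/

import Mathlib

noncomputable section

/-- The principal complex square root, `√z = z^{1/2}` (so `(√z)² = z` for all `z ∈ ℂ`). -/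
def csqrt (z : ℂ) : ℂ := z ^ (1 / 2 : ℂ)

/-- `Γ₊(x,y) = i √(x-y) √(x+y+1)`. -/
def Gp (x y : ℂ) : ℂ := Complex.I * csqrt (x - y) * csqrt (x + y + 1)

/-- `Γ₋(x,y) = i √(x+y) √(x-y+1)`. -/
def Gm (x y : ℂ) : ℂ := Complex.I * csqrt (x + y) * csqrt (x - y + 1)

/-- The carrier of the coupling `F_γ ⊗ D⁺_j` with `2γ = N`: the basis vector
`e_ν ⊗ f_m` with `ν = -γ + a` (`a ≤ N`) and `m = j + 1 + b` is indexed by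
`(a, b) : Fin (N+1) × ℕ`. -/
abbrev Wmod (N : ℕ) := (Fin (N + 1) × ℕ) →₀ ℂ

/-- `γ = N/2` as a complex number. -/
def gammaC (N : ℕ) : ℂ := (N : ℂ) / 2

/-- `ν = -γ + a`. -/
def nuC (N : ℕ) (a : Fin (N + 1)) : ℂ := -gammaC N + (a : ℕ)

/-- `m = j + 1 + b`. -/
def mC (j : ℂ) (b : ℕ) : ℂ := j + 1 + (b : ℕ)

/-- `J₀ (e_ν ⊗ f_m) = (ν + m) e_ν ⊗ f_m`. -/
def J0op (N : ℕ) (j : ℂ) : Wmod N →ₗ[ℂ] Wmod N :=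
  Finsupp.lsum ℂ fun ab => (nuC N ab.1 + mC j ab.2) • Finsupp.lsingle ab

/-- `J₊ (e_ν ⊗ f_m) = Γ₊(γ,ν) e_{ν+1} ⊗ f_m + Γ₊(j,m) e_ν ⊗ f_{m+1}` (terms with
vanishing coefficient drop out, so the wrap-around `Fin` index is harmless). -/
def Jpop (N : ℕ) (j : ℂ) : Wmod N →ₗ[ℂ] Wmod N :=
  Finsupp.lsum ℂ fun ab =>
    Gp (gammaC N) (nuC N ab.1) • Finsupp.lsingle (ab.1 + 1, ab.2) +
    Gp j (mC j ab.2) • Finsupp.lsingle (ab.1, ab.2 + 1)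

/-- `J₋ (e_ν ⊗ f_m) = Γ₋(γ,ν) e_{ν-1} ⊗ f_m + Γ₋(j,m) e_ν ⊗ f_{m-1}` (terms with
vanishing coefficient drop out, so the truncated index is harmless). -/
def Jmop (N : ℕ) (j : ℂ) : Wmod N →ₗ[ℂ] Wmod N :=
  Finsupp.lsum ℂ fun ab =>
    Gm (gammaC N) (nuC N ab.1) • Finsupp.lsingle (ab.1 - 1, ab.2) +
    Gm j (mC j ab.2) • Finsupp.lsingle (ab.1, ab.2 - 1)

/-- The Casimir operator `Q = -J₀(J₀+1) + J₋J₊`. -/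
def Qop (N : ℕ) (j : ℂ) : Wmod N →ₗ[ℂ] Wmod N :=
  -(J0op N j ∘ₗ (J0op N j + LinearMap.id)) + Jmop N j ∘ₗ Jpop N j

/-- The generating set of the `J₀`-eigenspace `V_M`, `M = j + 1 + γ`:
the basis vectors `e_ν ⊗ f_{M-ν}` with `ν = -γ + a ∈ M_γ`. -/
def VMset (N : ℕ) : Set (Wmod N) :=
  {w | ∃ a : Fin (N + 1), w = Finsupp.single (a, N - (a : ℕ)) (1 : ℂ)}

/-- The `(2γ+1)`-dimensional `J₀`-eigenspace `V_{j+1+γ} ⊆ F_γ ⊗ D⁺_j`. -/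
def VM (N : ℕ) : Submodule ℂ (Wmod N) := Submodule.span ℂ (VMset N)

/-!
The vectors `v_k = J₊^{2γ-k} (e_{-γ+k} ⊗ f_{j+1})`, `0 ≤ k ≤ 2γ`, all lie in `V_{j+1+γ}`.  Since `Q`
commutes with `J₊` and also equals `-J₀(J₀-1) + J₊J₋`, where `J₋` annihilates `f_{j+1}` and lowers
`e_{-γ+k}` to a multiple of `e_{-γ+k-1}`, the operator `Q` acts on them by a bidiagonal matrix:
`Q v_k = λ_k v_k + Γ₊(γ,-γ+k-1) v_{k-1}`, where `λ_k = -x_k(x_k-1)` and `x_k = -γ+k+j+1`.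

The parabola `x(x-1)` is symmetric about `1/2`, so `λ_n = λ_0` for `n = 2γ-2j-1`, and `1 ≤ n ≤ 2γ`
is exactly the range `-1/2 ≤ j ≤ γ-1`.  As no superdiagonal entry vanishes, `Q - λ_0` followed by a
polynomial in `Q` takes `v_n` to `v_0 ≠ 0`.  On a sum of eigenvectors, however, `Q - λ_0` kills the
`λ_0`-component, so it can never produce a nonzero `λ_0`-eigenvector.
-/

section Eigenspaces

open Module End

variable {R V : Type*} [CommRing R] [AddCommGroup V] [Module R V] {T : End R V}

lemma span_le_iSup_eigenspace {s : Set V} (hs : ∀ w ∈ s, ∃ c : R, T w = c • w) :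
    Submodule.span R s ≤ ⨆ μ, T.eigenspace μ :=
  Submodule.span_le.mpr fun w hw =>
    let ⟨c, hc⟩ := hs w hw
    Submodule.mem_iSup_of_mem c (mem_eigenspace_iff.mpr hc)

lemma map_mem_iSup_ne_eigenspace {c : R} {w : V} (hw : w ∈ ⨆ μ ≠ c, T.eigenspace μ) :
    T w ∈ ⨆ μ ≠ c, T.eigenspace μ := by
  suffices h : ⨆ μ ≠ c, T.eigenspace μ ≤ (⨆ μ ≠ c, T.eigenspace μ).comap T from h hw
  refine iSup₂_le fun μ hμ x hx => ?_
  rw [Submodule.mem_comap, mem_eigenspace_iff.mp hx]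
  exact Submodule.smul_mem _ _ (Submodule.mem_iSup_of_mem μ (Submodule.mem_iSup_of_mem hμ hx))

lemma map_sub_smul_mem_iSup_ne_eigenspace (c : R) {w : V} (hw : w ∈ ⨆ μ, T.eigenspace μ) :
    T w - c • w ∈ ⨆ μ ≠ c, T.eigenspace μ := by
  suffices h : ⨆ μ, T.eigenspace μ ≤ (⨆ μ ≠ c, T.eigenspace μ).comap (T - c • 1) from h hw
  refine iSup_le fun μ x hx => ?_
  rw [Submodule.mem_comap, LinearMap.sub_apply, LinearMap.smul_apply, one_apply,
    mem_eigenspace_iff.mp hx, ← sub_smul]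
  rcases eq_or_ne μ c with rfl | hμ
  · rw [sub_self, zero_smul]
    exact Submodule.zero_mem _
  · exact Submodule.smul_mem _ _ (Submodule.mem_iSup_of_mem μ (Submodule.mem_iSup_of_mem hμ hx))

lemma eigenspace_eq_supported {R ι : Type*} [CommRing R] [IsDomain R] {T : End R (ι →₀ R)}
    {d : ι → R} (hT : ∀ w i, T w i = d i * w i) (μ : R) :
    T.eigenspace μ = Finsupp.supported R R {i | d i = μ} := by
  ext w
  rw [mem_eigenspace_iff, Finsupp.mem_supported', Finsupp.ext_iff]
  refine forall_congr' fun i => ?_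
  rw [hT, Finsupp.smul_apply, smul_eq_mul, mul_eq_mul_right_iff, Set.mem_ofPred_eq,
    or_iff_not_imp_left]

end Eigenspaces

section Bidiagonal

open Module End

variable {K V : Type*} [Field K] [AddCommGroup V] [Module K V] {T : End K V}
  {v : ℕ → V} {eig c : ℕ → K} {n : ℕ}

lemma bidiagonal_zero_mem {U : Submodule K V} (hU : ∀ w ∈ U, T w ∈ U)
    (hT : ∀ k < n, T (v (k + 1)) = eig (k + 1) • v (k + 1) + c k • v k)
    (hc : ∀ k < n, c k ≠ 0) (hv : v n ∈ U) : v 0 ∈ U := by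
  induction n with
  | zero => exact hv
  | succ n ih =>
    refine ih (fun k hk => hT k (by omega)) (fun k hk => hc k (by omega)) ?_
    have h : c n • v n = T (v (n + 1)) - eig (n + 1) • v (n + 1) := by
      rw [hT n n.lt_succ_self, add_sub_cancel_left]
    rw [← U.smul_mem_iff (hc n n.lt_succ_self), h]
    exact U.sub_mem (hU _ hv) (U.smul_mem _ hv)

lemma bidiagonal_notMem_iSup_eigenspace (h0 : v 0 ≠ 0) (hT0 : T (v 0) = eig 0 • v 0)
    (hT : ∀ k < n + 1, T (v (k + 1)) = eig (k + 1) • v (k + 1) + c k • v k)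
    (hc : ∀ k < n + 1, c k ≠ 0) (heig : eig (n + 1) = eig 0) :
    v (n + 1) ∉ ⨆ μ, T.eigenspace μ := by
  intro hv
  have hn : v n ∈ ⨆ μ ≠ eig 0, T.eigenspace μ := by
    have h := map_sub_smul_mem_iSup_ne_eigenspace (eig 0) hv
    rwa [hT n n.lt_succ_self, heig, add_sub_cancel_left,
      Submodule.smul_mem_iff _ (hc n n.lt_succ_self)] at h
  have h : v 0 ∈ ⨆ μ ≠ eig 0, T.eigenspace μ :=
    bidiagonal_zero_mem (fun _ => map_mem_iSup_ne_eigenspace) (fun k hk => hT k (by omega))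
      (fun k hk => hc k (by omega)) hn
  exact h0 (Submodule.disjoint_def.mp (T.eigenspaces_iSupIndep (eig 0)) _
    (mem_eigenspace_iff.mpr hT0) h)

end Bidiagonal

section Casimir

variable {A : Type*} [Ring A] {H E F : A}

/-- The Casimir element of a weight element `H`, a raising element `E` and a lowering element `F`,
normalised for the relations `[H,E] = E`, `[H,F] = -F`, `[F,E] = 2H`. -/
def casimir (H E F : A) : A := -(H * (H + 1)) + F * E

lemma casimir_eq_mul_lowering (hFE : F * E = E * F + 2 * H) :
    casimir H E F = -(H * (H - 1)) + E * F := by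
  rw [casimir, hFE]; noncomm_ring

lemma casimir_commute_raising (hE : H * E = E * H + E) (hFE : F * E = E * F + 2 * H) :
    Commute (casimir H E F) E := by
  change (-(H * (H + 1)) + F * E) * E = E * (-(H * (H + 1)) + F * E)
  linear_combination (norm := noncomm_ring) hFE * E - H * hE - hE * H

lemma casimir_commute_weight (hE : H * E = E * H + E) (hF : H * F = F * H - F) :
    Commute (casimir H E F) H := by
  change (-(H * (H + 1)) + F * E) * H = H * (-(H * (H + 1)) + F * E)
  linear_combination (norm := noncomm_ring) -F * hE - hF * E

end Casimir

section CasimirOnWeightVectors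

open Module End

variable {R V : Type*} [CommRing R] [AddCommGroup V] [Module R V] {H E F : End R V} {x : R} {w : V}

lemma raising_pow_mem_eigenspace (hE : H * E = E * H + E) (hw : w ∈ H.eigenspace x) (n : ℕ) :
    (E ^ n) w ∈ H.eigenspace (x + n) := by
  induction n with
  | zero => simpa using hw
  | succ n ih =>
    rw [mem_eigenspace_iff] at ih ⊢
    have h := LinearMap.congr_fun hE ((E ^ n) w)
    rw [mul_apply, LinearMap.add_apply, mul_apply, ih, map_smul] at h
    rw [pow_succ', mul_apply, h]
    push_cast
    module

lemma casimir_apply_of_mem_eigenspace (hFE : F * E = E * F + 2 * H) (hw : w ∈ H.eigenspace x) :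
    casimir H E F w = -(x * (x - 1)) • w + E (F w) := by
  rw [mem_eigenspace_iff] at hw
  rw [casimir_eq_mul_lowering hFE, LinearMap.add_apply, LinearMap.neg_apply, mul_apply, mul_apply,
    LinearMap.sub_apply, one_apply, hw, map_sub, map_smul, hw]
  module

end CasimirOnWeightVectors

section StructureCoefficients

lemma csqrt_mul_self (z : ℂ) : csqrt z * csqrt z = z := by
  rw [csqrt, ← sq, one_div]
  exact_mod_cast Complex.cpow_nat_inv_pow z two_ne_zero

lemma csqrt_eq_zero_iff {z : ℂ} : csqrt z = 0 ↔ z = 0 := by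
  rw [← mul_self_eq_zero, csqrt_mul_self]

lemma Gp_eq_zero_iff {x y : ℂ} : Gp x y = 0 ↔ x - y = 0 ∨ x + y + 1 = 0 := by
  simp only [Gp, mul_eq_zero, Complex.I_ne_zero, false_or, csqrt_eq_zero_iff]

lemma Gm_eq_zero_iff {x y : ℂ} : Gm x y = 0 ↔ x + y = 0 ∨ x - y + 1 = 0 := by
  simp only [Gm, mul_eq_zero, Complex.I_ne_zero, false_or, csqrt_eq_zero_iff]

lemma Gm_add_one (x y : ℂ) : Gm x (y + 1) = Gp x y := by
  rw [Gm, Gp, show x - (y + 1) + 1 = x - y by ring, ← add_assoc, mul_right_comm]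

lemma Gp_mul_self (x y : ℂ) : Gp x y * Gp x y = -((x - y) * (x + y + 1)) := by
  calc Gp x y * Gp x y
      = (Complex.I * Complex.I) * (csqrt (x - y) * csqrt (x - y)) *
          (csqrt (x + y + 1) * csqrt (x + y + 1)) := by rw [Gp]; ring
    _ = -((x - y) * (x + y + 1)) := by
      rw [Complex.I_mul_I, csqrt_mul_self, csqrt_mul_self]; ring

variable {N : ℕ}

lemma Gp_gammaC_last : Gp (gammaC N) (nuC N (Fin.last N)) = 0 := by
  rw [Gp_eq_zero_iff, nuC, gammaC, Fin.val_last]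
  left; ring

lemma Gp_gammaC_ne_zero {a : Fin (N + 1)} (ha : a ≠ Fin.last N) :
    Gp (gammaC N) (nuC N a) ≠ 0 := by
  rw [Ne, Gp_eq_zero_iff, nuC, gammaC, not_or]
  constructor
  · rw [show (N : ℂ) / 2 - (-(N / 2) + (a : ℕ)) = N - (a : ℕ) by ring, sub_eq_zero]
    exact_mod_cast (Fin.val_lt_last ha).ne'
  · rw [add_neg_cancel_left]
    exact_mod_cast (a : ℕ).succ_ne_zero

lemma Gm_gammaC_zero : Gm (gammaC N) (nuC N 0) = 0 := by
  simp [Gm_eq_zero_iff, nuC]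

lemma Gm_mC_zero (j : ℂ) : Gm j (mC j 0) = 0 := by
  simp [Gm_eq_zero_iff, mC]

lemma nuC_add_one {a : Fin (N + 1)} (ha : a ≠ Fin.last N) : nuC N (a + 1) = nuC N a + 1 := by
  rw [nuC, nuC, Fin.val_add_one, if_neg ha, Nat.cast_add_one, add_assoc]

lemma nuC_sub_one {a : Fin (N + 1)} (ha : a ≠ 0) : nuC N (a - 1) = nuC N a - 1 := by
  have h : a - 1 ≠ Fin.last N := by rwa [Ne, sub_eq_iff_eq_add, Fin.last_add_one]
  rw [eq_sub_iff_add_eq, ← nuC_add_one h, sub_add_cancel]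

lemma mC_succ (j : ℂ) (b : ℕ) : mC j (b + 1) = mC j b + 1 := by
  rw [mC, mC, Nat.cast_add_one, ← add_assoc]

lemma nuC_add_one_mul_Gp (a : Fin (N + 1)) :
    nuC N (a + 1) * Gp (gammaC N) (nuC N a) = (nuC N a + 1) * Gp (gammaC N) (nuC N a) := by
  rcases eq_or_ne a (Fin.last N) with rfl | ha
  · rw [Gp_gammaC_last, mul_zero, mul_zero]
  · rw [nuC_add_one ha]

lemma nuC_sub_one_mul_Gm (a : Fin (N + 1)) :
    nuC N (a - 1) * Gm (gammaC N) (nuC N a) = (nuC N a - 1) * Gm (gammaC N) (nuC N a) := by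
  rcases eq_or_ne a 0 with rfl | ha
  · rw [Gm_gammaC_zero, mul_zero, mul_zero]
  · rw [nuC_sub_one ha]

lemma mC_pred_mul_Gm (j : ℂ) (b : ℕ) :
    mC j (b - 1) * Gm j (mC j b) = (mC j b - 1) * Gm j (mC j b) := by
  cases b with
  | zero => rw [Gm_mC_zero, mul_zero, mul_zero]
  | succ b => rw [mC_succ, Nat.add_sub_cancel, add_sub_cancel_right]

lemma Gm_nuC_add_one_mul_Gp (a : Fin (N + 1)) :
    Gm (gammaC N) (nuC N (a + 1)) * Gp (gammaC N) (nuC N a) =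
      -((gammaC N - nuC N a) * (gammaC N + nuC N a + 1)) := by
  rw [← Gp_mul_self]
  rcases eq_or_ne a (Fin.last N) with rfl | ha
  · rw [Gp_gammaC_last, mul_zero, mul_zero]
  · rw [nuC_add_one ha, Gm_add_one]

lemma Gp_nuC_sub_one_mul_Gm (a : Fin (N + 1)) :
    Gp (gammaC N) (nuC N (a - 1)) * Gm (gammaC N) (nuC N a) =
      -((gammaC N - nuC N a + 1) * (gammaC N + nuC N a)) := by
  rcases eq_or_ne a 0 with rfl | ha
  · rw [Gm_gammaC_zero]; simp [nuC]
  · have h : Gm (gammaC N) (nuC N a) = Gp (gammaC N) (nuC N (a - 1)) := by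
      rw [← Gm_add_one, nuC_sub_one ha, sub_add_cancel]
    rw [h, Gp_mul_self, nuC_sub_one ha]; ring

end StructureCoefficients

section Ladder

open Module End

/-- The basis vector `e_ν ⊗ f_m` with `ν = -γ + a` and `m = j + 1 + b`. -/
def basisVec {N : ℕ} (a : Fin (N + 1)) (b : ℕ) : Wmod N := Finsupp.single (a, b) 1

variable {N : ℕ} (j : ℂ)

lemma linearMap_ext_basisVec {M : Type*} [AddCommGroup M] [Module ℂ M] {S T : Wmod N →ₗ[ℂ] M}
    (h : ∀ a b, S (basisVec a b) = T (basisVec a b)) : S = T :=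
  Finsupp.lhom_ext' fun p => LinearMap.ext_ring (h p.1 p.2)

lemma J0op_basisVec (a : Fin (N + 1)) (b : ℕ) :
    J0op N j (basisVec a b) = (nuC N a + mC j b) • basisVec a b := by
  simp [J0op, basisVec]

lemma Jpop_basisVec (a : Fin (N + 1)) (b : ℕ) :
    Jpop N j (basisVec a b) =
      Gp (gammaC N) (nuC N a) • basisVec (a + 1) b + Gp j (mC j b) • basisVec a (b + 1) := by
  simp [Jpop, basisVec]

lemma Jmop_basisVec (a : Fin (N + 1)) (b : ℕ) :
    Jmop N j (basisVec a b) =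
      Gm (gammaC N) (nuC N a) • basisVec (a - 1) b + Gm j (mC j b) • basisVec a (b - 1) := by
  simp [Jmop, basisVec]

lemma J0op_mul_Jpop : J0op N j * Jpop N j = Jpop N j * J0op N j + Jpop N j := by
  refine linearMap_ext_basisVec fun a b => ?_
  simp only [mul_apply, LinearMap.add_apply, Jpop_basisVec, J0op_basisVec, map_add, map_smul,
    mC_succ]
  linear_combination (norm := module) nuC_add_one_mul_Gp a • basisVec (a + 1) b

lemma J0op_mul_Jmop : J0op N j * Jmop N j = Jmop N j * J0op N j - Jmop N j := by
  refine linearMap_ext_basisVec fun a b => ?_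
  simp only [mul_apply, LinearMap.sub_apply, Jmop_basisVec, J0op_basisVec, map_add, map_smul]
  linear_combination (norm := module) nuC_sub_one_mul_Gm a • basisVec (a - 1) b +
    mC_pred_mul_Gm j b • basisVec a (b - 1)

lemma Jmop_mul_Jpop : Jmop N j * Jpop N j = Jpop N j * Jmop N j + 2 * J0op N j := by
  refine linearMap_ext_basisVec fun a b => ?_
  have hb : (Gp j (mC j (b - 1)) * Gm j (mC j b)) • basisVec a (b - 1 + 1) =
      (-((j - mC j b + 1) * (j + mC j b))) • basisVec a b := by
    cases b with
    | zero => rw [Gm_mC_zero]; simp [mC]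
    | succ b => rw [Nat.add_sub_cancel, mC_succ, Gm_add_one, Gp_mul_self]; congr 1; ring
  simp only [two_mul, mul_apply, LinearMap.add_apply, Jpop_basisVec, Jmop_basisVec, J0op_basisVec,
    map_add, map_smul, add_sub_cancel_right, sub_add_cancel, Nat.add_sub_cancel, mC_succ,
    Gm_add_one]
  linear_combination (norm := module) (Gm_nuC_add_one_mul_Gp a - Gp_nuC_sub_one_mul_Gm a +
    Gp_mul_self j (mC j b)) • basisVec a b - hb

lemma Qop_eq_casimir : Qop N j = casimir (J0op N j) (Jpop N j) (Jmop N j) := rfl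

lemma Qop_commute_J0op : Commute (Qop N j) (J0op N j) :=
  casimir_commute_weight (A := End ℂ (Wmod N)) (J0op_mul_Jpop j) (J0op_mul_Jmop j)

lemma Qop_commute_Jpop : Commute (Qop N j) (Jpop N j) :=
  casimir_commute_raising (A := End ℂ (Wmod N)) (J0op_mul_Jpop j) (Jmop_mul_Jpop j)

lemma J0op_apply (w : Wmod N) (p : Fin (N + 1) × ℕ) :
    J0op N j w p = (nuC N p.1 + mC j p.2) * w p := by
  suffices h : Finsupp.lapply p ∘ₗ J0op N j = (nuC N p.1 + mC j p.2) • Finsupp.lapply p from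
    LinearMap.congr_fun h w
  refine linearMap_ext_basisVec fun a b => ?_
  simp only [LinearMap.comp_apply, J0op_basisVec, map_smul, LinearMap.smul_apply, smul_eq_mul]
  rcases eq_or_ne p (a, b) with rfl | hp
  · rfl
  · simp [basisVec, Finsupp.single_eq_of_ne hp]

lemma VM_eq_eigenspace : VM N = eigenspace (J0op N j) (j + 1 + gammaC N) := by
  rw [eigenspace_eq_supported (J0op_apply j), Finsupp.supported_eq_span_single, VM]
  congr 1
  ext w
  constructor
  · rintro ⟨a, rfl⟩
    refine ⟨(a, N - a), ?_, rfl⟩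
    simp only [Set.mem_ofPred_eq, nuC, mC, gammaC, Nat.cast_sub a.is_le]
    ring
  · rintro ⟨⟨a, b⟩, hab, rfl⟩
    have h : ((a : ℕ) : ℂ) + b = N := by
      simp only [Set.mem_ofPred_eq, nuC, mC, gammaC] at hab
      linear_combination hab
    have hb : b = N - a := by
      have : (a : ℕ) + b = N := by exact_mod_cast h
      omega
    exact ⟨a, by rw [hb]⟩

lemma Qop_mem_VM {w : Wmod N} (hw : w ∈ VM N) : Qop N j w ∈ VM N := by
  rw [VM_eq_eigenspace j] at hw ⊢
  exact mapsTo_genEigenspace_of_comm (Qop_commute_J0op j).symm _ 1 hw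

lemma Jpop_apply_zero_succ (w : Wmod N) (b : ℕ) :
    Jpop N j w (0, b + 1) = Gp j (mC j b) * w (0, b) := by
  suffices h : Finsupp.lapply (0, b + 1) ∘ₗ Jpop N j = Gp j (mC j b) • Finsupp.lapply (0, b) from
    LinearMap.congr_fun h w
  refine linearMap_ext_basisVec fun a d => ?_
  have hwrap : Gp (gammaC N) (nuC N a) * basisVec (a + 1) d (0, b + 1) = 0 := by
    rcases eq_or_ne a (Fin.last N) with rfl | ha
    · rw [Gp_gammaC_last, zero_mul]
    · have h : 0 ≠ a + 1 := fun h => ha (add_right_cancel (h.symm.trans (Fin.last_add_one N).symm))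
      rw [basisVec, Finsupp.single_eq_of_ne (by simp [h]), mul_zero]
  simp only [LinearMap.comp_apply, Jpop_basisVec, map_add, map_smul, LinearMap.smul_apply,
    Finsupp.lapply_apply, smul_eq_mul, hwrap, zero_add]
  rcases eq_or_ne d b with rfl | hd
  · simp [basisVec, Finsupp.single_apply]
  · simp [basisVec, hd]

end Ladder

section RaisedVectors

open Module End

/-- The vector `J₊^{N-k} (e_{-γ+k} ⊗ f_{j+1})`, meant for `k ≤ N`; the exponent is chosen so that
all of these vectors have the same weight `j + 1 + γ`. -/
def raisedVec (N : ℕ) (j : ℂ) (k : ℕ) : Wmod N :=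
  (Jpop N j ^ (N - k)) (basisVec (Fin.ofNat (N + 1) k) 0)

/-- The weight `-γ + k + j + 1` of `e_{-γ+k} ⊗ f_{j+1}`. -/
def bottomWeight (N : ℕ) (j : ℂ) (k : ℕ) : ℂ := -gammaC N + k + (j + 1)

/-- The diagonal entry `λ_k` of `Q` on the vectors `raisedVec N j k`. -/
def casimirValue (N : ℕ) (j : ℂ) (k : ℕ) : ℂ := -(bottomWeight N j k * (bottomWeight N j k - 1))

variable {N : ℕ} (j : ℂ)

lemma basisVec_mem_eigenspace_bottomWeight {k : ℕ} (hk : k ≤ N) :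
    basisVec (Fin.ofNat (N + 1) k) 0 ∈ eigenspace (J0op N j) (bottomWeight N j k) := by
  rw [mem_eigenspace_iff, J0op_basisVec, nuC, mC, Fin.val_ofNat,
    Nat.mod_eq_of_lt (Nat.lt_succ_of_le hk), Nat.cast_zero, add_zero, bottomWeight]

lemma raisedVec_mem_VM {k : ℕ} (hk : k ≤ N) : raisedVec N j k ∈ VM N := by
  have hweight : j + 1 + gammaC N = bottomWeight N j k + (N - k : ℕ) := by
    rw [bottomWeight, gammaC, Nat.cast_sub hk]; ring
  rw [VM_eq_eigenspace j, hweight]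
  exact raising_pow_mem_eigenspace (J0op_mul_Jpop j) (basisVec_mem_eigenspace_bottomWeight j hk) _

lemma Qop_Jpop_pow_basisVec {k : ℕ} (hk : k ≤ N) (n : ℕ) :
    Qop N j ((Jpop N j ^ n) (basisVec (Fin.ofNat (N + 1) k) 0)) =
      casimirValue N j k • (Jpop N j ^ n) (basisVec (Fin.ofNat (N + 1) k) 0) +
        (Jpop N j ^ (n + 1)) (Jmop N j (basisVec (Fin.ofNat (N + 1) k) 0)) := by
  have hcomm := LinearMap.congr_fun ((Qop_commute_Jpop j).pow_right n).eq
    (basisVec (Fin.ofNat (N + 1) k) 0)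
  rw [mul_apply, mul_apply] at hcomm
  rw [hcomm, Qop_eq_casimir, casimir_apply_of_mem_eigenspace (Jmop_mul_Jpop j)
    (basisVec_mem_eigenspace_bottomWeight j hk), map_add, map_smul, pow_succ, mul_apply,
    casimirValue]

lemma Qop_raisedVec_zero : Qop N j (raisedVec N j 0) = casimirValue N j 0 • raisedVec N j 0 := by
  have hlowest : Jmop N j (basisVec (Fin.ofNat (N + 1) 0) 0) = 0 := by
    rw [Jmop_basisVec, Gm_mC_zero, show Fin.ofNat (N + 1) 0 = 0 from rfl, Gm_gammaC_zero]
    module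
  rw [raisedVec, Qop_Jpop_pow_basisVec j N.zero_le, hlowest, map_zero, add_zero]

lemma ofNat_ne_last {k : ℕ} (hk : k < N) : Fin.ofNat (N + 1) k ≠ Fin.last N := by
  rw [Ne, Fin.ext_iff, Fin.val_ofNat, Fin.val_last, Nat.mod_eq_of_lt (by omega)]
  exact hk.ne

lemma Qop_raisedVec_succ {k : ℕ} (hk : k < N) :
    Qop N j (raisedVec N j (k + 1)) = casimirValue N j (k + 1) • raisedVec N j (k + 1) +
      Gp (gammaC N) (nuC N (Fin.ofNat (N + 1) k)) • raisedVec N j k := by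
  have hlower : Jmop N j (basisVec (Fin.ofNat (N + 1) (k + 1)) 0) =
      Gp (gammaC N) (nuC N (Fin.ofNat (N + 1) k)) • basisVec (Fin.ofNat (N + 1) k) 0 := by
    have hsucc : Fin.ofNat (N + 1) (k + 1) = Fin.ofNat (N + 1) k + 1 := by
      ext; simp [Fin.val_add]
    rw [Jmop_basisVec, Gm_mC_zero, hsucc, nuC_add_one (ofNat_ne_last hk), Gm_add_one,
      add_sub_cancel_right, zero_smul, add_zero]
  rw [raisedVec, Qop_Jpop_pow_basisVec j hk, hlower, map_smul, raisedVec,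
    show N - (k + 1) + 1 = N - k by omega]

variable {j}

lemma Jpop_pow_basisVec_zero_apply_ne_zero (hj : ∀ b : ℕ, 2 * j + 2 + b ≠ 0) (n : ℕ) :
    (Jpop N j ^ n) (basisVec 0 0) (0, n) ≠ 0 := by
  induction n with
  | zero => simp [basisVec]
  | succ n ih =>
    rw [pow_succ', mul_apply, Jpop_apply_zero_succ]
    refine mul_ne_zero ?_ ih
    rw [Ne, Gp_eq_zero_iff, mC, not_or]
    constructor
    · rw [show j - (j + 1 + (n : ℂ)) = -(n + 1) by ring, neg_eq_zero]
      exact n.cast_add_one_ne_zero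
    · rw [show j + (j + 1 + (n : ℂ)) + 1 = 2 * j + 2 + n by ring]
      exact hj n

lemma raisedVec_zero_ne_zero (hj : ∀ b : ℕ, 2 * j + 2 + b ≠ 0) : raisedVec N j 0 ≠ 0 := fun h =>
  Jpop_pow_basisVec_zero_apply_ne_zero hj N (DFunLike.congr_fun h (0, N))

lemma casimirValue_eq_of_bottomWeight_add {k l : ℕ}
    (h : bottomWeight N j k + bottomWeight N j l = 1) :
    casimirValue N j k = casimirValue N j l := by
  rw [casimirValue, casimirValue]
  linear_combination (bottomWeight N j l - bottomWeight N j k) * h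

lemma raisedVec_notMem_iSup_eigenspace {n : ℕ} (hn : n < N) (hj : 2 * j + 2 + n = N) :
    raisedVec N j (n + 1) ∉ ⨆ μ, eigenspace (Qop N j) μ := by
  have hne : raisedVec N j 0 ≠ 0 := by
    refine raisedVec_zero_ne_zero fun b => ?_
    rw [eq_sub_of_add_eq hj, ← Nat.cast_sub hn.le]
    exact_mod_cast (show N - n + b ≠ 0 by omega)
  have hval : casimirValue N j (n + 1) = casimirValue N j 0 := by
    refine casimirValue_eq_of_bottomWeight_add ?_
    rw [bottomWeight, bottomWeight, gammaC]
    push_cast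
    linear_combination hj
  exact bidiagonal_notMem_iSup_eigenspace hne (Qop_raisedVec_zero j)
    (fun k hk => Qop_raisedVec_succ j (by omega))
    (fun k hk => Gp_gammaC_ne_zero (ofNat_ne_last (by omega))) hval

end RaisedVectors

lemma exists_lt_two_mul_add_two_add_eq {N : ℕ} {q : ℚ} (hhalf : ∃ k : ℤ, (k : ℚ) = 2 * q)
    (hge : -(1 / 2) ≤ q) (hle : q ≤ (N : ℚ) / 2 - 1) :
    ∃ n : ℕ, n < N ∧ 2 * q + 2 + n = N := by
  obtain ⟨k, hk⟩ := hhalf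
  have hk_ge : -1 ≤ k := by
    have : (-1 : ℚ) ≤ k := by linarith
    exact_mod_cast this
  have hk_le : k ≤ (N : ℤ) - 2 := by
    have : (k : ℚ) ≤ N - 2 := by linarith
    exact_mod_cast this
  obtain ⟨n, hn⟩ := Int.eq_ofNat_of_zero_le (show 0 ≤ (N : ℤ) - 2 - k by omega)
  refine ⟨n, by omega, ?_⟩
  rw [← hk]
  exact_mod_cast (show k + 2 + n = (N : ℤ) by omega)

/-- In `F_γ ⊗ D⁺_j` with `j` a half-integer and `-½ ≤ j ≤ γ - 1`, the Casimir `Q`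
preserves the `J₀`-eigenspace `V_{j+1+γ}`, but its restriction to it is NOT
diagonalizable: no set of `Q`-eigenvectors spans `V_{j+1+γ}`.  Consequently `Q` is not
diagonalizable on the whole coupling either. -/
theorem casimir_not_diagonalizable (N : ℕ) (hN : 1 ≤ N) (jr : ℚ)
    (hhalf : ∃ k : ℤ, (k : ℚ) = 2 * jr) (hge : -(1 / 2) ≤ jr)
    (hle : jr ≤ (N : ℚ) / 2 - 1) :
    (∀ w ∈ VM N, Qop N (jr : ℂ) w ∈ VM N) ∧
    (¬ ∃ s : Set (Wmod N),
      (∀ w ∈ s, ∃ c : ℂ, Qop N (jr : ℂ) w = c • w) ∧ Submodule.span ℂ s = VM N) ∧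
    (¬ ∃ s : Set (Wmod N),
      (∀ w ∈ s, ∃ c : ℂ, Qop N (jr : ℂ) w = c • w) ∧ Submodule.span ℂ s = ⊤) := by
  obtain ⟨n, hnN, hn⟩ := exists_lt_two_mul_add_two_add_eq hhalf hge hle
  have hjn : 2 * (jr : ℂ) + 2 + n = N := by exact_mod_cast congrArg (Rat.cast : ℚ → ℂ) hn
  have notMem_span (s : Set (Wmod N)) (hs : ∀ w ∈ s, ∃ c : ℂ, Qop N (jr : ℂ) w = c • w) :
      raisedVec N jr (n + 1) ∉ Submodule.span ℂ s :=
    fun h => raisedVec_notMem_iSup_eigenspace hnN hjn (span_le_iSup_eigenspace hs h)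
  refine ⟨fun w hw => Qop_mem_VM _ hw, ?_, ?_⟩
  · rintro ⟨s, hs, hspan⟩
    exact notMem_span s hs (hspan ▸ raisedVec_mem_VM _ hnN)
  · rintro ⟨s, hs, hspan⟩
    exact notMem_span s hs (hspan ▸ Submodule.mem_top)

end
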